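/- Suppose a_k ≤ 0 for k = 2, …, s. Then for every u ∈ U, Q^a(u) ≤ A ‖Du‖²_{ℓ²_ε} − Σ_{k=2}^{s} ε² a_k ((k⁴ − k²)/12) ‖D²u‖²_{ℓ²_ε}. -/

import Mathlib

/-!
Put `v = Du`, `M = ∑ v_ℓ²` and `E = ∑ (v_ℓ - v_{ℓ-1})²`, sums being over one period. Expanding the
square and using `v_i v_j = (v_i² + v_j² - (v_i - v_j)²) / 2` together with shift invariance,
`∑_ℓ (∑_{j<k} v_{ℓ+j})² = ∑_{i,j<k} (M - ½ ∑_ℓ (v_{ℓ+i} - v_{ℓ+j})²)`.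
By telescoping and Cauchy–Schwarz, `∑_ℓ (v_{ℓ+i} - v_{ℓ+j})² ≤ (i - j)² E`
(`sum_sq_sub_le`), and `∑_{i,j<k} (i - j)² = (k⁴ - k²) / 6`; hence
`∑_ℓ (∑_{j<k} v_{ℓ+j})² ≥ k² M - (k⁴ - k²)/12 · E` (`sum_window_sq_ge`).
Multiplying by `a_k ≤ 0` for `k ≥ 2` reverses the inequality, the term `k = 1` is an equality, and
`ε² ‖D²u‖² = ε E`.
-/

open Finset Real

noncomputable section

/-- scaled lattice spacing ε = 1/N -/
def eps (N : ℕ) : ℝ := 1 / N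

/-- the index range ℓ = -N+1, …, N -/
def rng (N : ℕ) : Finset ℤ := Finset.Icc (-(N : ℤ) + 1) N

/-- 2N-periodicity of a sequence -/
def Periodic2N (N : ℕ) (u : ℤ → ℝ) : Prop := ∀ ℓ : ℤ, u (ℓ + 2 * (N : ℤ)) = u ℓ

/-- the space 𝒰 of 2N-periodic zero-mean displacements -/
def memU (N : ℕ) (u : ℤ → ℝ) : Prop :=
  Periodic2N N u ∧ ∑ ℓ ∈ rng N, u ℓ = 0

/-- discrete differentiation operator: (Dv)_ℓ = (v_ℓ - v_{ℓ-1})/ε -/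
def Dv (N : ℕ) (v : ℤ → ℝ) : ℤ → ℝ := fun ℓ => (v ℓ - v (ℓ - 1)) / eps N

/-- squared discrete ℓ²_ε norm -/
def nsq (N : ℕ) (v : ℤ → ℝ) : ℝ := eps N * ∑ ℓ ∈ rng N, v ℓ ^ 2

/-- discrete ℓ²_ε norm -/
def nrm (N : ℕ) (v : ℤ → ℝ) : ℝ := Real.sqrt (nsq N v)

/-- squared discrete ℓ²_ε seminorm over an index set S -/
def nsqS (N : ℕ) (S : Finset ℤ) (v : ℤ → ℝ) : ℝ := eps N * ∑ ℓ ∈ S, v ℓ ^ 2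

/-- discrete ℓ²_ε seminorm over an index set S -/
def nrmS (N : ℕ) (S : Finset ℤ) (v : ℤ → ℝ) : ℝ := Real.sqrt (nsqS N S v)

/-- discrete ℓ^∞ norm over an index set S -/
def linf (S : Finset ℤ) (v : ℤ → ℝ) : ℝ := sSup ((fun ℓ => |v ℓ|) '' (S : Set ℤ))

/-- the interfacial index set 𝒜_qnl(k) -/
def Aqnl (K : ℤ) (k : ℕ) : Finset ℤ := Finset.Icc (-K - (k : ℤ) + 1) (K + 1)

/-- the continuum index set 𝒞_qnl(k) -/
def Cqnl (N : ℕ) (K : ℤ) (k : ℕ) : Finset ℤ :=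
  Finset.Icc (-(N : ℤ) + 1) (-K - (k : ℤ)) ∪ Finset.Icc (K + 2) (N : ℤ)

/-- the interface ℐ_qnl(k) between continuum and atomistic regions -/
def Iqnl (K : ℤ) (k : ℕ) : Finset ℤ :=
  Finset.Icc (-K - (k : ℤ) + 1) (-K - 1) ∪ Finset.Icc (K + 2) (K + (k : ℤ))

/-- the extended continuum region 𝒞̃_qnl(k) = 𝒞_qnl(k) ∪ ℐ_qnl(k) -/
def Ctil (N : ℕ) (K : ℤ) (k : ℕ) : Finset ℤ := Cqnl N K k ∪ Iqnl K k

/-- the s-th nearest-neighbor atomistic Hessian quadratic form -/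
def Qa (N s : ℕ) (a : ℕ → ℝ) (u : ℤ → ℝ) : ℝ :=
  eps N * ∑ ℓ ∈ rng N, ∑ k ∈ Finset.Icc 1 s,
    a k * (∑ j ∈ Finset.range k, Dv N u (ℓ + (j : ℤ))) ^ 2

lemma sum_rng_shift_one (N : ℕ) (f : ℤ → ℝ) (hf : Periodic2N N f) :
    ∑ ℓ ∈ rng N, f (ℓ + 1) = ∑ ℓ ∈ rng N, f ℓ := by
  have h1 : ∑ ℓ ∈ rng N, f (ℓ + 1) = ∑ ℓ ∈ Finset.Icc (-(N : ℤ) + 2) (N + 1), f ℓ := by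
    refine Finset.sum_bij' (fun ℓ _ => ℓ + 1) (fun ℓ _ => ℓ - 1) ?_ ?_ ?_ ?_ ?_ <;>
      simp [rng] <;> intros <;> omega
  rw [h1]
  rcases Nat.eq_zero_or_pos N with rfl | hN
  · simp [rng]
  have h2 : rng N = insert (-(N : ℤ) + 1) (Finset.Icc (-(N : ℤ) + 2) N) := by
    ext x; simp [rng]; omega
  have h3 : Finset.Icc (-(N : ℤ) + 2) (N + 1)
      = insert ((N : ℤ) + 1) (Finset.Icc (-(N : ℤ) + 2) N) := by
    ext x; simp; omega
  rw [h2, h3, Finset.sum_insert (by simp), Finset.sum_insert (by simp),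
    ← hf (-(N : ℤ) + 1)]
  congr 2
  ring

lemma Periodic2N.shift {N : ℕ} {f : ℤ → ℝ} (hf : Periodic2N N f) (m : ℤ) :
    Periodic2N N (fun ℓ => f (ℓ + m)) := by
  intro ℓ
  have := hf (ℓ + m)
  simpa only [add_right_comm] using this

lemma sum_rng_shift (N : ℕ) (f : ℤ → ℝ) (hf : Periodic2N N f) (m : ℕ) :
    ∑ ℓ ∈ rng N, f (ℓ + m) = ∑ ℓ ∈ rng N, f ℓ := by
  induction m with
  | zero => simp
  | succ m ih =>
    rw [← ih, ← sum_rng_shift_one N (fun ℓ => f (ℓ + m)) (hf.shift m)]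
    refine Finset.sum_congr rfl fun ℓ _ => ?_
    congr 1
    push_cast
    ring

/-- Telescoping and Cauchy–Schwarz bound the energy of a difference of step `m` by `m²` times the
energy of a difference of step one. -/
lemma sum_sq_sub_le_aux (N : ℕ) (v : ℤ → ℝ) (hv : Periodic2N N v) (m : ℕ) :
    ∑ ℓ ∈ rng N, (v (ℓ + m) - v ℓ) ^ 2
      ≤ (m : ℝ) ^ 2 * ∑ ℓ ∈ rng N, (v ℓ - v (ℓ - 1)) ^ 2 := by
  have hper : Periodic2N N (fun ℓ => (v ℓ - v (ℓ - 1)) ^ 2) := by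
    intro ℓ
    have h := hv (ℓ - 1)
    rw [sub_add_eq_add_sub] at h
    simp only [hv ℓ, h]
  have htel : ∀ ℓ : ℤ, v (ℓ + m) - v ℓ
      = ∑ t ∈ Finset.range m, (v (ℓ + (t + 1 : ℕ)) - v (ℓ + (t + 1 : ℕ) - 1)) := by
    intro ℓ
    have h := Finset.sum_range_sub (fun t : ℕ => v (ℓ + t)) m
    simp only [Nat.cast_zero, add_zero] at h
    rw [← h]
    refine Finset.sum_congr rfl fun t _ => ?_
    congr 2
    push_cast
    ring
  calc ∑ ℓ ∈ rng N, (v (ℓ + m) - v ℓ) ^ 2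
      ≤ ∑ ℓ ∈ rng N, (m : ℝ) * ∑ t ∈ Finset.range m,
          (v (ℓ + (t + 1 : ℕ)) - v (ℓ + (t + 1 : ℕ) - 1)) ^ 2 := by
        refine Finset.sum_le_sum fun ℓ _ => ?_
        rw [htel ℓ]
        simpa using sq_sum_le_card_mul_sum_sq (s := Finset.range m)
          (f := fun t : ℕ => v (ℓ + (t + 1 : ℕ)) - v (ℓ + (t + 1 : ℕ) - 1))
    _ = (m : ℝ) ^ 2 * ∑ ℓ ∈ rng N, (v ℓ - v (ℓ - 1)) ^ 2 := by
        rw [← Finset.mul_sum, Finset.sum_comm,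
          Finset.sum_congr rfl fun t _ => sum_rng_shift N _ hper (t + 1)]
        simp
        ring

lemma sum_sq_sub_le (N : ℕ) (v : ℤ → ℝ) (hv : Periodic2N N v) (i j : ℕ) :
    ∑ ℓ ∈ rng N, (v (ℓ + i) - v (ℓ + j)) ^ 2
      ≤ ((i : ℝ) - j) ^ 2 * ∑ ℓ ∈ rng N, (v ℓ - v (ℓ - 1)) ^ 2 := by
  wlog hij : j ≤ i generalizing i j
  · have h := this j i (by omega)
    rw [sub_sq_comm (i : ℝ) j]
    simpa only [sub_sq_comm] using h
  obtain ⟨m, rfl⟩ := Nat.exists_eq_add_of_le hij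
  have hper : Periodic2N N (fun ℓ => (v (ℓ + m) - v ℓ) ^ 2) := by
    intro ℓ
    have h := hv.shift m ℓ
    simp only at h
    simp only [hv ℓ, h]
  have h := sum_rng_shift N _ hper j
  simp only [add_assoc] at h
  have h2 := sum_sq_sub_le_aux N v hv m
  rw [← h] at h2
  push_cast
  simpa using h2

lemma sum_sum_sub_sq (k : ℕ) :
    ∑ i ∈ Finset.range k, ∑ j ∈ Finset.range k, ((i : ℝ) - j) ^ 2
      = ((k : ℝ) ^ 4 - (k : ℝ) ^ 2) / 6 := by
  have h1 : ∀ n : ℕ, ∑ i ∈ Finset.range n, (i : ℝ) = n * (n - 1) / 2 := by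
    intro n
    induction n with
    | zero => simp
    | succ n ih => rw [Finset.sum_range_succ, ih]; push_cast; ring
  have h2 : ∀ n : ℕ, ∑ i ∈ Finset.range n, (i : ℝ) ^ 2 = n * (n - 1) * (2 * n - 1) / 6 := by
    intro n
    induction n with
    | zero => simp
    | succ n ih => rw [Finset.sum_range_succ, ih]; push_cast; ring
  simp only [sub_sq, Finset.sum_add_distrib, Finset.sum_sub_distrib, ← Finset.mul_sum,
    ← Finset.sum_mul, Finset.sum_const, Finset.card_range, nsmul_eq_mul, h1, h2]
  ring

/-- Lower bound for the energy of the window sums of length `k`; the defect with respect to `k² M`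
is controlled by the energy of the first differences. -/
lemma sum_window_sq_ge (N : ℕ) (v : ℤ → ℝ) (hv : Periodic2N N v) (k : ℕ) :
    (k : ℝ) ^ 2 * ∑ ℓ ∈ rng N, v ℓ ^ 2
        - ((k : ℝ) ^ 4 - (k : ℝ) ^ 2) / 12 * ∑ ℓ ∈ rng N, (v ℓ - v (ℓ - 1)) ^ 2
      ≤ ∑ ℓ ∈ rng N, (∑ j ∈ Finset.range k, v (ℓ + (j : ℤ))) ^ 2 := by
  have hper : Periodic2N N (fun ℓ => v ℓ ^ 2) := fun ℓ => by simp only [hv ℓ]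
  have hs := fun i : ℕ => sum_rng_shift N _ hper i
  set M := ∑ ℓ ∈ rng N, v ℓ ^ 2 with hM
  set E := ∑ ℓ ∈ rng N, (v ℓ - v (ℓ - 1)) ^ 2 with hE
  have hprod : ∀ i j : ℕ, M - ((i : ℝ) - j) ^ 2 * (E / 2)
      ≤ ∑ ℓ ∈ rng N, v (ℓ + i) * v (ℓ + j) := by
    intro i j
    have h := sum_sq_sub_le N v hv i j
    have e : ∑ ℓ ∈ rng N, (v (ℓ + i) - v (ℓ + j)) ^ 2
        = 2 * M - 2 * ∑ ℓ ∈ rng N, v (ℓ + i) * v (ℓ + j) := by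
      simp only [sub_sq, Finset.sum_add_distrib, Finset.sum_sub_distrib, hs, mul_assoc,
        ← Finset.mul_sum]
      ring
    rw [e] at h
    linarith
  calc (k : ℝ) ^ 2 * M - ((k : ℝ) ^ 4 - (k : ℝ) ^ 2) / 12 * E
      = ∑ i ∈ Finset.range k, ∑ j ∈ Finset.range k, (M - ((i : ℝ) - j) ^ 2 * (E / 2)) := by
        simp only [Finset.sum_sub_distrib, ← Finset.sum_mul, sum_sum_sub_sq]
        simp
        ring
    _ ≤ ∑ i ∈ Finset.range k, ∑ j ∈ Finset.range k, ∑ ℓ ∈ rng N, v (ℓ + i) * v (ℓ + j) :=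
        Finset.sum_le_sum fun i _ => Finset.sum_le_sum fun j _ => hprod i j
    _ = ∑ ℓ ∈ rng N, (∑ j ∈ Finset.range k, v (ℓ + (j : ℤ))) ^ 2 := by
        simp only [sq, Finset.sum_mul_sum]
        rw [Finset.sum_comm (s := rng N)]
        exact Finset.sum_congr rfl fun i _ => Finset.sum_comm

/-- upper bound for the s-th nearest-neighbor atomistic Hessian. -/
theorem atomistic_hessian_upper_bound (N : ℕ) (hN : 0 < N) (s : ℕ) (hs : 2 ≤ s)
    (a : ℕ → ℝ) (ha : ∀ k ∈ Finset.Icc 2 s, a k ≤ 0)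
    (u : ℤ → ℝ) (hu : memU N u) :
    Qa N s a u ≤
      (∑ k ∈ Finset.Icc 1 s, (k : ℝ) ^ 2 * a k) * nsq N (Dv N u)
        - ∑ k ∈ Finset.Icc 2 s,
            (eps N) ^ 2 * a k * (((k : ℝ) ^ 4 - (k : ℝ) ^ 2) / 12) * nsq N (Dv N (Dv N u)) := by
  have he : 0 < eps N := by unfold eps; positivity
  have hv : Periodic2N N (Dv N u) := by
    intro ℓ
    have h := hu.1 (ℓ - 1)
    rw [sub_add_eq_add_sub] at h
    simp only [Dv, hu.1 ℓ, h]
  have hD2 : eps N ^ 2 * nsq N (Dv N (Dv N u))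
      = eps N * ∑ ℓ ∈ rng N, (Dv N u ℓ - Dv N u (ℓ - 1)) ^ 2 := by
    have h : ∀ ℓ, Dv N (Dv N u) ℓ = (Dv N u ℓ - Dv N u (ℓ - 1)) / eps N := fun _ => rfl
    simp only [nsq, h, div_pow, ← Finset.sum_div]
    field_simp
  have hsplit : Finset.Icc 1 s = insert 1 (Finset.Icc 2 s) := by
    ext x; simp; omega
  have hM : nsq N (Dv N u) = eps N * ∑ ℓ ∈ rng N, Dv N u ℓ ^ 2 := rfl
  have hwin := sum_window_sq_ge N (Dv N u) hv
  have hQ : Qa N s a u = ∑ k ∈ Finset.Icc 1 s, eps N * (a k *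
      ∑ ℓ ∈ rng N, (∑ j ∈ Finset.range k, Dv N u (ℓ + (j : ℤ))) ^ 2) := by
    unfold Qa
    rw [Finset.sum_comm, Finset.mul_sum]
    simp only [Finset.mul_sum]
  rw [hQ, hsplit, Finset.sum_insert (by simp), Finset.sum_insert (by simp), add_mul,
    add_sub_assoc, Finset.sum_mul, ← Finset.sum_sub_distrib]
  refine add_le_add (le_of_eq ?_) (Finset.sum_le_sum fun k hk => ?_)
  · simp [hM]
    ring
  · have h := mul_le_mul_of_nonneg_left
      (mul_le_mul_of_nonpos_left (hwin k) (ha k hk)) he.le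
    refine h.trans (le_of_eq ?_)
    linear_combination (-(a k) * (((k : ℝ) ^ 4 - (k : ℝ) ^ 2) / 12)) * (- hD2)
      - (k : ℝ) ^ 2 * a k * hM
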